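/- Let E be a finite equation set for which there exists an occur-check free run of MMA. Then every run of MMA⁻ on E is correct: if E is not unifiable, the run halts with failure (by action (2)); if E is unifiable, the run ends with an equation set in semi-solved form that has the same solutions as E (in particular, the final set is unifiable). -/

import Mathlib

/-- Finite first-order terms: variables and function applications.
A function symbol is identified by its name together with the number of
arguments it is applied to (fixed arity). -/
inductive Trm : Type where
  | var : ℕ → Trm
  | fn  : ℕ → List Trm → Trm

namespace Trm

/-- `|t|`: the number of occurrences of variables and function symbols
(including constants) in the term `t`. -/
def size : Trm → ℕ
  | .var _ => 1
  | .fn _ ts => 1 + (ts.attach.map (fun ⟨t, _⟩ => size t)).sum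
decreasing_by
  have := List.sizeOf_lt_of_mem ‹_ ∈ ts›
  simp [Trm.fn.sizeOf_spec]; omega

/-- Application of a substitution (a map from variables to terms) to a term. -/
def subst (σ : ℕ → Trm) : Trm → Trm
  | .var x => σ x
  | .fn f ts => .fn f (ts.attach.map (fun ⟨t, _⟩ => subst σ t))
decreasing_by
  have := List.sizeOf_lt_of_mem ‹_ ∈ ts›
  simp [Trm.fn.sizeOf_spec]; omega

/-- The number of occurrences of the variable `x` in a term. -/
def count (x : ℕ) : Trm → ℕ
  | .var y => if y = x then 1 else 0
  | .fn _ ts => (ts.attach.map (fun ⟨t, _⟩ => count x t)).sum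
decreasing_by
  have := List.sizeOf_lt_of_mem ‹_ ∈ ts›
  simp [Trm.fn.sizeOf_spec]; omega

/-- `Occurs x t` : the variable `x` occurs in the term `t`. -/
inductive Occurs (x : ℕ) : Trm → Prop where
  | var : Occurs x (.var x)
  | fn {f : ℕ} {ts : List Trm} {t : Trm} : t ∈ ts → Occurs x t → Occurs x (.fn f ts)

end Trm

/-- The set of variables occurring in a term. -/
def varSet (t : Trm) : Set ℕ := {x | Trm.Occurs x t}

/-- The set of variables occurring in a list (tuple) of terms. -/
def varsL (l : List Trm) : Set ℕ := {x | ∃ t ∈ l, Trm.Occurs x t}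

/-- The number of occurrences of a variable in a list (tuple) of terms. -/
def countL (x : ℕ) (l : List Trm) : ℕ := (l.map (Trm.count x)).sum

/-- A term is ground if no variable occurs in it. -/
def Ground (t : Trm) : Prop := ∀ x, ¬ Trm.Occurs x t

/-- An equation set: a set of equations `s ≐ t` between terms,
represented as pairs of terms. -/
abbrev EqSet := Set (Trm × Trm)

/-- `σ` is a solution (unifier) of the equation set `E`. -/
def Solves (σ : ℕ → Trm) (E : EqSet) : Prop :=
  ∀ e ∈ E, Trm.subst σ e.1 = Trm.subst σ e.2

/-- `E` is unifiable: it has a unifier. -/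
def Unifiable (E : EqSet) : Prop := ∃ σ, Solves σ E

/-- `θ` is a most general unifier of `E`. -/
def IsMgu (θ : ℕ → Trm) (E : EqSet) : Prop :=
  Solves θ E ∧ ∀ σ, Solves σ E → ∃ ρ, ∀ x, σ x = Trm.subst ρ (θ x)

/-- The equation set `s ≐̈ t` pairing corresponding members of two
equal-length tuples of terms. -/
def zipEqs (s t : List Trm) : EqSet := {e | e ∈ s.zip t}

/-- The substitution `{X/t}` mapping `X` to `t` and every other variable
to itself. -/
def single (X : ℕ) (t : Trm) : ℕ → Trm :=
  fun y => if y = X then t else .var y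

/-- The equation set `Eθ`: the substitution applied to both sides of
every equation of `E`. -/
def substE (θ : ℕ → Trm) (E : EqSet) : EqSet :=
  (fun e => (Trm.subst θ e.1, Trm.subst θ e.2)) '' E

/-- One step of the Martelli–Montanari algorithm MMA: actions (1), (3), (4),
(5).  (Actions (2) and (6) halt with failure and produce no next equation
set; their applicability is captured by `ClashApp` and `OccApp` below.)
Two function applications carry the same function symbol iff they have the
same name and the same number of arguments (fixed arity). -/
inductive MMAStep : EqSet → EqSet → Prop where
  /-- Action (1): replace `f(s1,…,sn) ≐ f(t1,…,tn)` by `s1 ≐ t1, …, sn ≐ tn`. -/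
  | decomp {E : EqSet} {f : ℕ} {sl tl : List Trm} :
      (Trm.fn f sl, Trm.fn f tl) ∈ E → sl.length = tl.length →
      MMAStep E ((E \ {(Trm.fn f sl, Trm.fn f tl)}) ∪ {e | e ∈ sl.zip tl})
  /-- Action (3): delete an equation `X ≐ X`. -/
  | delete {E : EqSet} {x : ℕ} :
      (Trm.var x, Trm.var x) ∈ E →
      MMAStep E (E \ {(Trm.var x, Trm.var x)})
  /-- Action (4): replace `t ≐ X` (`t` not a variable) by `X ≐ t`. -/
  | flip {E : EqSet} {t : Trm} {x : ℕ} :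
      (t, Trm.var x) ∈ E → (∀ y, t ≠ Trm.var y) →
      MMAStep E ((E \ {(t, Trm.var x)}) ∪ {(Trm.var x, t)})
  /-- Action (5): on `X ≐ t` with `X ∉ Var(t)` and `X` occurring elsewhere,
  apply `{X/t}` to all other equations. -/
  | elim {E : EqSet} {x : ℕ} {t : Trm} :
      (Trm.var x, t) ∈ E → ¬ Trm.Occurs x t →
      (∃ e ∈ E \ {(Trm.var x, t)}, Trm.Occurs x e.1 ∨ Trm.Occurs x e.2) →
      MMAStep E ({(Trm.var x, t)} ∪ substE (single x t) (E \ {(Trm.var x, t)}))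

/-- Action (2) is applicable to `E`: `E` contains an equation
`f(s1,…,sn) ≐ g(t1,…,tm)` where the two function symbols differ. -/
def ClashApp (E : EqSet) : Prop :=
  ∃ f sl g tl, (Trm.fn f sl, Trm.fn g tl) ∈ E ∧
    (f ≠ g ∨ sl.length ≠ tl.length)

/-- Action (6) (the occur-check) is applicable to `E`: `E` contains an
equation `X ≐ t` with `X ∈ Var(t)` and `X ≠ t`. -/
def OccApp (E : EqSet) : Prop :=
  ∃ x t, (Trm.var x, t) ∈ E ∧ Trm.Occurs x t ∧ t ≠ Trm.var x

/-- One step of the algorithm MMA⁻ (MMA without the occur-check):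
actions (1), (3), (4), (5a), (5b). -/
inductive MMAmStep : EqSet → EqSet → Prop where
  /-- Action (1). -/
  | decomp {E : EqSet} {f : ℕ} {sl tl : List Trm} :
      (Trm.fn f sl, Trm.fn f tl) ∈ E → sl.length = tl.length →
      MMAmStep E ((E \ {(Trm.fn f sl, Trm.fn f tl)}) ∪ {e | e ∈ sl.zip tl})
  /-- Action (3). -/
  | delete {E : EqSet} {x : ℕ} :
      (Trm.var x, Trm.var x) ∈ E →
      MMAmStep E (E \ {(Trm.var x, Trm.var x)})
  /-- Action (4). -/
  | flip {E : EqSet} {t : Trm} {x : ℕ} :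
      (t, Trm.var x) ∈ E → (∀ y, t ≠ Trm.var y) →
      MMAmStep E ((E \ {(t, Trm.var x)}) ∪ {(Trm.var x, t)})
  /-- Action (5a): on `X ≐ Y` with `X, Y` distinct variables and `X`
  occurring elsewhere, apply `{X/Y}` to all other equations. -/
  | elimVar {E : EqSet} {x y : ℕ} :
      (Trm.var x, Trm.var y) ∈ E → x ≠ y →
      (∃ e ∈ E \ {(Trm.var x, Trm.var y)}, Trm.Occurs x e.1 ∨ Trm.Occurs x e.2) →
      MMAmStep E
        ({(Trm.var x, Trm.var y)} ∪
          substE (single x (Trm.var y)) (E \ {(Trm.var x, Trm.var y)}))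
  /-- Action (5b): on `X ≐ t`, `X ≐ u` with `t, u` distinct non-variable
  terms and `|t| ≤ |u|`, replace `X ≐ u` by `t ≐ u`. -/
  | merge {E : EqSet} {x : ℕ} {t u : Trm} :
      (Trm.var x, t) ∈ E → (Trm.var x, u) ∈ E → t ≠ u →
      (∀ y, t ≠ Trm.var y) → (∀ y, u ≠ Trm.var y) → t.size ≤ u.size →
      MMAmStep E ((E \ {(Trm.var x, u)}) ∪ {(t, u)})

/-- `F` is reachable from `E` by (non-failing) actions of MMA. -/
def Reachable (E F : EqSet) : Prop := Relation.ReflTransGen MMAStep E F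

/-- `E` is NSTO: no run of MMA on `E` performs action (6), i.e. the
occur-check action is never applicable along any run. -/
def NSTO (E : EqSet) : Prop := ∀ F, Reachable E F → ¬ OccApp F

/-- `E` is WNSTO: there exists an occur-check free run of MMA on `E`, i.e. a
maximal run that either halts with failure by action (2), or ends with an
equation set to which no action (including (2) and (6)) applies — without
ever performing action (6). -/
def WNSTO (E : EqSet) : Prop :=
  ∃ F, Reachable E F ∧
    (ClashApp F ∨ (¬ ClashApp F ∧ ¬ OccApp F ∧ ∀ F', ¬ MMAStep F F'))

/- `E` is in semi-solved form: `E = {X1 ≐ t1, …, Xn ≐ tn}` where the `Xi`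
are distinct variables, each `Xi` is distinct from `ti`, and whenever `ti`
is a variable, `Xi` occurs only once in the whole equation set. -/
open Classical in
noncomputable def SemiSolved (E : EqSet) : Prop :=
  (∀ e ∈ E, ∃ x t, e = (Trm.var x, t) ∧ t ≠ Trm.var x) ∧
  (∀ e ∈ E, ∀ e' ∈ E, e.1 = e'.1 → e = e') ∧
  (∀ x y, (Trm.var x, Trm.var y) ∈ E →
    ∀ e ∈ E, Trm.count x e.1 + Trm.count x e.2 =
      if e = (Trm.var x, Trm.var y) then 1 else 0)

/-- There exists an occur-check free run of MMA on `E`: a maximal run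
(a maximal sequence of equation sets, each obtained from the previous by an
action) that never performs action (6); thus it either halts with failure
by performing action (2), or ends with an equation set to which no action
of MMA applies. -/
def ExistsOCFreeRun (E : EqSet) : Prop :=
  ∃ L : List EqSet, ∃ F : EqSet,
    L.head? = some E ∧ L.Chain' MMAStep ∧ L.getLast? = some F ∧
    (ClashApp F ∨ (¬ ClashApp F ∧ ¬ OccApp F ∧ ∀ F', ¬ MMAStep F F'))

theorem Trm.ind {P : Trm → Prop} (hv : ∀ x, P (.var x))
    (hf : ∀ f ts, (∀ t ∈ ts, P t) → P (.fn f ts)) : ∀ t, P t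
  | .var x => hv x
  | .fn f ts => hf f ts (fun t _ => Trm.ind hv hf t)
decreasing_by
  have := List.sizeOf_lt_of_mem ‹_ ∈ ts›
  simp [Trm.fn.sizeOf_spec]; omega

def evalT {M : Type} (op : ℕ → List M → M) (σ : ℕ → M) : Trm → M
  | .var x => σ x
  | .fn f ts => op f (ts.attach.map (fun ⟨t, _⟩ => evalT op σ t))
decreasing_by
  have := List.sizeOf_lt_of_mem ‹_ ∈ ts›
  simp [Trm.fn.sizeOf_spec]; omega

theorem evalT_var {M : Type} (op : ℕ → List M → M) (σ : ℕ → M) (x : ℕ) :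
    evalT op σ (.var x) = σ x := by rw [evalT]

theorem evalT_fn {M : Type} (op : ℕ → List M → M) (σ : ℕ → M) (f : ℕ) (ts : List Trm) :
    evalT op σ (.fn f ts) = op f (ts.map (evalT op σ)) := by
  rw [evalT]; simp

theorem subst_var' (σ : ℕ → Trm) (x : ℕ) : Trm.subst σ (.var x) = σ x := by rw [Trm.subst]

theorem subst_fn' (σ : ℕ → Trm) (f : ℕ) (ts : List Trm) :
    Trm.subst σ (.fn f ts) = .fn f (ts.map (Trm.subst σ)) := by
  rw [Trm.subst]; simp

theorem count_zero {x : ℕ} : ∀ t : Trm, ¬ Trm.Occurs x t → Trm.count x t = 0 := by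
  apply Trm.ind
  · intro y h
    rw [Trm.count]
    split_ifs with hh
    · subst hh; exact absurd Trm.Occurs.var h
    · rfl
  · intro f ts ih h
    rw [Trm.count]
    simp only [List.sum_eq_zero_iff, List.mem_map, List.mem_attach, true_and]
    rintro a ⟨⟨t, ht⟩, rfl⟩
    exact ih t ht (fun ho => h (.fn ht ho))

theorem subst_eq_evalT (σ : ℕ → Trm) : ∀ t, Trm.subst σ t = evalT Trm.fn σ t := by
  apply Trm.ind
  · intro x; rw [subst_var', evalT_var]
  · intro f ts ih
    rw [subst_fn', evalT_fn, List.map_congr_left ih]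

theorem evalT_subst {M : Type} (op : ℕ → List M → M) (σ : ℕ → M) (θ : ℕ → Trm)
    (h : ∀ x, evalT op σ (θ x) = σ x) :
    ∀ t, evalT op σ (Trm.subst θ t) = evalT op σ t := by
  apply Trm.ind
  · intro x; rw [subst_var', evalT_var, h]
  · intro f ts ih
    rw [subst_fn', evalT_fn, evalT_fn, List.map_map]
    congr 1
    exact List.map_congr_left ih

theorem evalT_single {M : Type} (op : ℕ → List M → M) (σ : ℕ → M) (x : ℕ) (u : Trm)
    (h : σ x = evalT op σ u) (t : Trm) :
    evalT op σ (Trm.subst (single x u) t) = evalT op σ t := by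
  apply evalT_subst
  intro y
  unfold single
  split_ifs with hy
  · rw [hy, h]
  · rw [evalT_var]

def SolM {M : Type} (op : ℕ → List M → M) (σ : ℕ → M) (E : EqSet) : Prop :=
  ∀ e ∈ E, evalT op σ e.1 = evalT op σ e.2

def InjOp {M : Type} (op : ℕ → List M → M) : Prop :=
  ∀ f l g l', op f l = op g l' → f = g ∧ l = l'

theorem injOp_fn : InjOp Trm.fn := by
  intro f l g l' h; injection h with h1 h2; exact ⟨h1, h2⟩

theorem solves_iff (σ : ℕ → Trm) (E : EqSet) : Solves σ E ↔ SolM Trm.fn σ E := by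
  simp only [Solves, SolM, subst_eq_evalT]

theorem zip_iff {M : Type} (g : Trm → M) : ∀ (sl tl : List Trm), sl.length = tl.length →
    (sl.map g = tl.map g ↔ ∀ e ∈ sl.zip tl, g e.1 = g e.2)
  | [], [], _ => by simp
  | [], _ :: _, h => by simp at h
  | _ :: _, [], h => by simp at h
  | a :: sl, b :: tl, h => by
    have := zip_iff g sl tl (by simpa using h)
    simp only [List.map_cons, List.cons.injEq, List.zip_cons_cons, List.forall_mem_cons, this]

/-- Replacing equations by equivalent ones. -/
theorem solM_replace {M : Type} (op : ℕ → List M → M) (σ : ℕ → M) (E G : EqSet) (e : Trm × Trm)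
    (he : e ∈ E) (h : SolM op σ (E \ {e}) → (evalT op σ e.1 = evalT op σ e.2 ↔ SolM op σ G)) :
    SolM op σ ((E \ {e}) ∪ G) ↔ SolM op σ E := by
  constructor
  · intro hs
    have h1 : SolM op σ (E \ {e}) := fun d hd => hs d (Or.inl hd)
    have h2 := (h h1).2 (fun d hd => hs d (Or.inr hd))
    intro d hd
    by_cases hde : d = e
    · rw [hde]; exact h2
    · exact h1 d ⟨hd, hde⟩
  · intro hs
    have h1 : SolM op σ (E \ {e}) := fun d hd => hs d hd.1
    have h2 := (h h1).1 (hs e he)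
    rintro d (hd | hd)
    · exact h1 d hd
    · exact h2 d hd

theorem sol_decomp {M : Type} {op : ℕ → List M → M} (hop : InjOp op) (σ : ℕ → M) {E : EqSet}
    {f : ℕ} {sl tl : List Trm} (h : (Trm.fn f sl, Trm.fn f tl) ∈ E)
    (hl : sl.length = tl.length) :
    SolM op σ ((E \ {(Trm.fn f sl, Trm.fn f tl)}) ∪ {e | e ∈ sl.zip tl}) ↔ SolM op σ E := by
  apply solM_replace op σ E _ _ h
  intro _
  simp only [evalT_fn]
  have := zip_iff (evalT op σ) sl tl hl
  constructor
  · intro h; exact this.1 (hop _ _ _ _ h).2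
  · intro h; rw [this.2 h]

theorem sol_delete {M : Type} {op : ℕ → List M → M} (σ : ℕ → M) {E : EqSet} {x : ℕ}
    (h : (Trm.var x, Trm.var x) ∈ E) :
    SolM op σ (E \ {(Trm.var x, Trm.var x)}) ↔ SolM op σ E := by
  have := solM_replace op σ E ∅ _ h (fun _ => by simp [SolM])
  simpa using this

theorem sol_flip {M : Type} {op : ℕ → List M → M} (σ : ℕ → M) {E : EqSet} {x : ℕ} {t : Trm}
    (h : (t, Trm.var x) ∈ E) :
    SolM op σ ((E \ {(t, Trm.var x)}) ∪ {(Trm.var x, t)}) ↔ SolM op σ E := by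
  apply solM_replace op σ E _ _ h
  intro _
  simp only [SolM, Set.mem_singleton_iff, forall_eq]
  exact eq_comm

theorem sol_elim {M : Type} {op : ℕ → List M → M} (σ : ℕ → M) {E : EqSet} {x : ℕ} {t : Trm}
    (h : (Trm.var x, t) ∈ E) :
    SolM op σ ({(Trm.var x, t)} ∪ substE (single x t) (E \ {(Trm.var x, t)})) ↔ SolM op σ E := by
  constructor
  · intro hs
    have h0 : evalT op σ (Trm.var x) = evalT op σ t := hs (Trm.var x, t) (Or.inl rfl)
    have h0' := h0
    rw [evalT_var] at h0'
    intro d hd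
    by_cases hde : d = (Trm.var x, t)
    · rw [hde]; exact h0
    · have := hs _ (Or.inr ⟨d, ⟨hd, hde⟩, rfl⟩)
      simpa only [evalT_single op σ x t h0'] using this
  · intro hs
    have h0 : evalT op σ (Trm.var x) = evalT op σ t := hs (Trm.var x, t) h
    have h0' := h0
    rw [evalT_var] at h0'
    rintro d (hd | ⟨d, hd, rfl⟩)
    · rw [hd]; exact h0
    · simp only [evalT_single op σ x t h0']
      exact hs d hd.1

theorem sol_mma {M : Type} {op : ℕ → List M → M} (hop : InjOp op) (σ : ℕ → M) {E F : EqSet}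
    (h : MMAStep E F) : SolM op σ F ↔ SolM op σ E := by
  cases h with
  | decomp h hl => exact sol_decomp hop σ h hl
  | delete h => exact sol_delete σ h
  | flip h _ => exact sol_flip σ h
  | elim h _ _ => exact sol_elim σ h

theorem sol_mmam {M : Type} {op : ℕ → List M → M} (hop : InjOp op) (σ : ℕ → M) {E F : EqSet}
    (h : MMAmStep E F) : SolM op σ F ↔ SolM op σ E := by
  cases h with
  | decomp h hl => exact sol_decomp hop σ h hl
  | delete h => exact sol_delete σ h
  | flip h _ => exact sol_flip σ h
  | elimVar h _ _ => exact sol_elim σ h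
  | @merge x t u ht hu hne _ _ _ =>
    apply solM_replace op σ E _ _ hu
    intro hs
    have := hs (Trm.var x, t) ⟨ht, fun h => hne (by injection h)⟩
    simp only [SolM, Set.mem_singleton_iff, forall_eq]
    simp only at this
    rw [this]

theorem sol_chain {M : Type} {op : ℕ → List M → M} (σ : ℕ → M) {R : EqSet → EqSet → Prop}
    (hR : ∀ E F, R E F → (SolM op σ F ↔ SolM op σ E)) :
    ∀ (L : List EqSet) (E F : EqSet), L.head? = some E → L.IsChain R → L.getLast? = some F →
      (SolM op σ F ↔ SolM op σ E)
  | [], _, _, h, _, _ => by simp at h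
  | [a], E, F, h, _, h' => by
    simp at h h'; rw [← h, ← h']
  | a :: b :: L, E, F, h, hc, h' => by
    rw [List.isChain_cons_cons] at hc
    have := sol_chain σ hR (b :: L) b F rfl hc.2 (by simpa using h')
    simp at h
    rw [this, hR _ _ hc.1, h]

theorem no_clash {M : Type} {op : ℕ → List M → M} (hop : InjOp op) (σ : ℕ → M) {E : EqSet}
    (h : SolM op σ E) : ¬ ClashApp E := by
  rintro ⟨f, sl, g, tl, hm, hd⟩
  have := h _ hm
  simp only [evalT_fn] at this
  obtain ⟨h1, h2⟩ := hop _ _ _ _ this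
  have h3 := congrArg List.length h2
  simp at h3
  exact hd.elim (fun h => h h1) (fun h => h h3)

/-- Infinite trees, as partial labellings of positions. -/
abbrev ITree : Type := List ℕ → Option (ℕ × ℕ)

def treeOp (f : ℕ) (ts : List ITree) : ITree
  | [] => some (f, ts.length)
  | i :: p => (ts[i]?).bind (fun t => t p)

theorem injOp_tree : InjOp treeOp := by
  intro f l g l' h
  have h0 := congrFun h []
  simp only [treeOp, Option.some.injEq, Prod.mk.injEq] at h0
  refine ⟨h0.1, List.ext_getElem h0.2 ?_⟩
  intro i h1 h2
  funext p
  have := congrFun h (i :: p)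
  simpa [treeOp, h1, h2] using this

structure Semi (F : EqSet) : Prop where
  p1 : ∀ e ∈ F, ∃ x t, e = (Trm.var x, t) ∧ t ≠ Trm.var x
  p2 : ∀ x t u, (Trm.var x, t) ∈ F → (Trm.var x, u) ∈ F → t = u
  p3 : ∀ x y, (Trm.var x, Trm.var y) ∈ F → ∀ e ∈ F, e ≠ (Trm.var x, Trm.var y) →
    ¬ Trm.Occurs x e.1 ∧ ¬ Trm.Occurs x e.2

theorem p1_of {F : EqSet} (hc : ¬ ClashApp F)
    (hd : ∀ f sl tl, (Trm.fn f sl, Trm.fn f tl) ∈ F → sl.length ≠ tl.length)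
    (hx : ∀ x, (Trm.var x, Trm.var x) ∉ F)
    (hfl : ∀ x f ts, (Trm.fn f ts, Trm.var x) ∉ F) :
    ∀ e ∈ F, ∃ x t, e = (Trm.var x, t) ∧ t ≠ Trm.var x := by
  rintro ⟨s, t⟩ he
  cases s with
  | var x => exact ⟨x, t, rfl, fun h => hx x (h ▸ he)⟩
  | fn f sl =>
    cases t with
    | var x => exact absurd he (hfl _ _ _)
    | fn g tl =>
      exfalso
      by_cases hfg : f = g
      · subst hfg
        exact hc ⟨f, sl, f, tl, he, Or.inr (hd _ _ _ he)⟩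
      · exact hc ⟨f, sl, g, tl, he, Or.inl hfg⟩

theorem semi_of {F : EqSet} (hc : ¬ ClashApp F) (hn : ∀ F', ¬ MMAmStep F F') : Semi F := by
  have p1 := p1_of hc (fun f sl tl h hl => hn _ (.decomp h hl)) (fun x h => hn _ (.delete h))
    (fun x f ts h => hn _ (.flip h (fun y hy => by cases hy)))
  have p3 : ∀ x y, (Trm.var x, Trm.var y) ∈ F → ∀ e ∈ F, e ≠ (Trm.var x, Trm.var y) →
      ¬ Trm.Occurs x e.1 ∧ ¬ Trm.Occurs x e.2 := by
    intro x y hxy e he hne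
    rw [← not_or]
    intro ho
    refine hn _ (.elimVar hxy ?_ ⟨e, ⟨he, hne⟩, ho⟩)
    rintro rfl
    exact hn _ (.delete hxy)
  refine ⟨p1, ?_, p3⟩
  intro x t u ht hu
  by_contra hne
  have hne' : (Trm.var x, u) ≠ (Trm.var x, t) := by
    intro h; injection h with _ h; exact hne h.symm
  by_cases h1 : ∃ y, t = Trm.var y
  · obtain ⟨y, rfl⟩ := h1
    exact (p3 x y ht _ hu hne').1 .var
  by_cases h2 : ∃ y, u = Trm.var y
  · obtain ⟨y, rfl⟩ := h2
    exact (p3 x y hu _ ht hne'.symm).1 .var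
  push Not at h1 h2
  rcases le_total t.size u.size with h | h
  · exact hn _ (.merge ht hu hne h1 h2 h)
  · exact hn _ (.merge hu ht (Ne.symm hne) h2 h1 h)

theorem Semi.semiSolved {F : EqSet} (h : Semi F) : SemiSolved F := by
  refine ⟨h.p1, ?_, ?_⟩
  · intro e he e' he' hee
    obtain ⟨x, t, rfl, _⟩ := h.p1 e he
    obtain ⟨y, u, rfl, _⟩ := h.p1 e' he'
    simp only [Trm.var.injEq] at hee
    subst hee
    rw [h.p2 _ _ _ he he']
  · intro x y hxy e he
    split_ifs with hee
    · subst hee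
      obtain ⟨a, b, hab, hne⟩ := h.p1 _ hxy
      simp only [Prod.mk.injEq, Trm.var.injEq] at hab
      obtain ⟨rfl, rfl⟩ := hab
      have : y ≠ x := fun h => hne (by rw [h])
      simp [Trm.count, this]
    · obtain ⟨h1, h2⟩ := h.p3 x y hxy e he hee
      rw [count_zero _ h1, count_zero _ h2]

open Classical in
noncomputable def resolve (F : EqSet) (x : ℕ) : Trm :=
  if h : ∃ t, (Trm.var x, t) ∈ F then h.choose else .var x

noncomputable def hnf (F : EqSet) : Trm → Trm
  | .fn f ts => .fn f ts
  | .var x => match resolve F x with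
    | .fn f ts => .fn f ts
    | .var y => resolve F y

noncomputable def valT (F : EqSet) : List ℕ → Trm → Option (ℕ × ℕ)
  | [], t => match hnf F t with
    | .fn f ts => some (f, ts.length)
    | .var _ => none
  | i :: p, t => match hnf F t with
    | .fn _ ts => (ts[i]?).bind (fun u => valT F p u)
    | .var _ => none

theorem valT_congr {F : EqSet} {s t : Trm} (h : hnf F s = hnf F t) (p : List ℕ) :
    valT F p s = valT F p t := by
  cases p <;> simp only [valT, h]

theorem resolve_eq {F : EqSet} (hu : ∀ x t u, (Trm.var x, t) ∈ F → (Trm.var x, u) ∈ F → t = u)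
    {x : ℕ} {t : Trm} (h : (Trm.var x, t) ∈ F) : resolve F x = t := by
  have hh : ∃ t, (Trm.var x, t) ∈ F := ⟨t, h⟩
  rw [resolve, dif_pos hh]
  exact hu _ _ _ hh.choose_spec h

theorem resolve_cases (F : EqSet) (x : ℕ) :
    (Trm.var x, resolve F x) ∈ F ∨ resolve F x = .var x := by
  unfold resolve
  split_ifs with h
  · exact Or.inl h.choose_spec
  · exact Or.inr rfl

theorem eval_valT (F : EqSet) : ∀ t : Trm,
    evalT treeOp (fun x p => valT F p (.var x)) t = fun p => valT F p t := by
  apply Trm.ind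
  · intro x; rw [evalT_var]
  · intro f ts ih
    rw [evalT_fn, List.map_congr_left ih]
    funext p
    cases p with
    | nil => simp [treeOp, valT, hnf]
    | cons i p => simp [treeOp, valT, hnf, Function.comp_def, Option.bind_map]

theorem Semi.hasSol {F : EqSet} (h : Semi F) :
    SolM treeOp (fun x p => valT F p (.var x)) F := by
  intro e he
  obtain ⟨x, t, rfl, hne⟩ := h.p1 e he
  simp only [eval_valT]
  funext p
  apply valT_congr
  have hr := resolve_eq h.p2 he
  cases t with
  | fn f ts => simp [hnf, hr]
  | var y =>
    have hy : resolve F y = .var y ∨ ∃ f ts, resolve F y = .fn f ts := by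
      rcases resolve_cases F y with h1 | h1
      · cases h2 : resolve F y with
        | fn f ts => exact Or.inr ⟨f, ts, rfl⟩
        | var z =>
          exfalso
          rw [h2] at h1
          refine (h.p3 y z h1 _ he ?_).2 .var
          intro h3
          injection h3 with h3 _
          injection h3 with h3
          exact hne (by rw [h3])
      · exact Or.inl h1
    rcases hy with hy | ⟨f, ts, hy⟩ <;> simp [hnf, hr, hy]

theorem subst_id {σ : ℕ → Trm} : ∀ t : Trm, (∀ x, Trm.Occurs x t → σ x = .var x) →
    Trm.subst σ t = t := by
  apply Trm.ind
  · intro x h; rw [subst_var', h x .var]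
  · intro f ts ih h
    rw [subst_fn']
    congr 1
    conv_rhs => rw [← List.map_id ts]
    apply List.map_congr_left
    intro t ht
    exact ih t ht (fun x hx => h x (.fn ht hx))

theorem unif_of_final {F : EqSet} (hc : ¬ ClashApp F) (ho : ¬ OccApp F)
    (hn : ∀ F', ¬ MMAStep F F') : Unifiable F := by
  have p1 := p1_of hc (fun f sl tl h hl => hn _ (.decomp h hl)) (fun x h => hn _ (.delete h))
    (fun x f ts h => hn _ (.flip h (fun y hy => by cases hy)))
  have hno : ∀ x t, (Trm.var x, t) ∈ F → ¬ Trm.Occurs x t := by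
    intro x t h hx
    obtain ⟨a, b, hab, hne⟩ := p1 _ h
    simp only [Prod.mk.injEq, Trm.var.injEq] at hab
    obtain ⟨rfl, rfl⟩ := hab
    exact ho ⟨x, t, h, hx, hne⟩
  have p3 : ∀ x t, (Trm.var x, t) ∈ F → ∀ e ∈ F, (Trm.Occurs x e.1 ∨ Trm.Occurs x e.2) →
      e = (Trm.var x, t) := by
    intro x t h e he hoc
    by_contra hne
    exact hn _ (.elim h (hno _ _ h) ⟨e, ⟨he, hne⟩, hoc⟩)
  refine ⟨resolve F, ?_⟩
  intro e he
  obtain ⟨x, t, rfl, hne⟩ := p1 e he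
  have hu : ∀ x t u, (Trm.var x, t) ∈ F → (Trm.var x, u) ∈ F → t = u := by
    intro x t u ht hu
    have := p3 x t ht _ hu (Or.inl .var)
    injection this with _ h
    exact h.symm
  simp only [subst_var']
  rw [resolve_eq hu he, subst_id]
  intro y hy
  rcases resolve_cases F y with h1 | h1
  · exfalso
    have := p3 y _ h1 _ he (Or.inr hy)
    injection this with h2 h3
    injection h2 with h2
    subst h2
    exact hno _ _ he hy
  · exact h1

/-- Let `E` be a finite equation set for which there exists an occur-check free
run of MMA.  Then every run of MMA⁻ on `E` is correct.  A run of MMA⁻ is a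
maximal sequence `L` of equation sets starting with `E`, consecutive sets
related by an action of MMA⁻, whose last set `F` either has action (2)
performed on it (the run halts with failure) or admits no action of MMA⁻.
Correctness: if `E` is not unifiable the run halts with failure; if `E` is
unifiable the run does not fail and ends with an equation set in semi-solved
form that has the same solutions as `E` (in particular, `F` is unifiable). -/
theorem stmt8 (E : EqSet) (hfin : E.Finite) (hocf : ExistsOCFreeRun E) :
    ∀ (L : List EqSet) (F : EqSet),
      L.head? = some E → L.Chain' MMAmStep → L.getLast? = some F →
      (ClashApp F ∨ (¬ ClashApp F ∧ ∀ F', ¬ MMAmStep F F')) →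
      ((¬ Unifiable E → ClashApp F) ∧
       (Unifiable E →
          ¬ ClashApp F ∧ SemiSolved F ∧
          (∀ σ, Solves σ F ↔ Solves σ E) ∧ Unifiable F)) := by
  intro L F hh hc hl hfinal
  have hsol : ∀ σ, Solves σ F ↔ Solves σ E := by
    intro σ
    rw [solves_iff, solves_iff]
    exact sol_chain σ (fun _ _ h => sol_mmam injOp_fn σ h) L E F hh hc hl
  constructor
  · intro hnu
    rcases hfinal with h | ⟨hcl, hn⟩
    · exact h
    exfalso
    obtain ⟨L', G, hh', hc', hl', hG⟩ := hocf
    have hF := (semi_of hcl hn).hasSol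
    rw [sol_chain _ (fun _ _ h => sol_mmam injOp_tree _ h) L E F hh hc hl,
      ← sol_chain _ (fun _ _ h => sol_mma injOp_tree _ h) L' E G hh' hc' hl'] at hF
    rcases hG with hG | ⟨h1, h2, h3⟩
    · exact no_clash injOp_tree _ hF hG
    · obtain ⟨σ, hσ⟩ := unif_of_final h1 h2 h3
      rw [solves_iff, sol_chain σ (fun _ _ h => sol_mma injOp_fn σ h) L' E G hh' hc' hl',
        ← solves_iff] at hσ
      exact hnu ⟨σ, hσ⟩
  · rintro ⟨σ, hσ⟩
    have hσF := (hsol σ).2 hσ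
    have hcl : ¬ ClashApp F := no_clash injOp_fn σ ((solves_iff _ _).1 hσF)
    refine ⟨hcl, ?_, hsol, σ, hσF⟩
    rcases hfinal with h | ⟨_, hn⟩
    · exact absurd h hcl
    · exact (semi_of hcl hn).semiSolved
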